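/- Let q ∈ ℝ with |q| > 1 and n ≥ 1. Let H = ℓ²(ℤ × ℕⁿ) with orthonormal basis e_{(k₀,k)}, k₀ ∈ ℤ, k = (k₁, …, k_n) ∈ ℕⁿ, and define bounded operators: X₁ e_{(k₀,k)} = q^{−(k₁+⋯+k_n)} e_{(k₀+1,k)}; for i = 2, …, n+1, X_i e_{(k₀,k)} = (1 − q^{−2k_{i−1}})^{1/2} q^{−(k_i+⋯+k_n)} e_{(k₀, k−δ_{i−1})} (zero when k_{i−1} = 0); and F e_{(k₀,k)} = e_{(k₀,k)} if k₀ > 0, F e_{(k₀,k)} = −e_{(k₀,k)} if k₀ ≤ 0. Then: (a) F X_i = X_i F for all i = 2, …, n+1; (b) the commutator F X₁ − X₁ F is the operator sending e_{(0,k)} to 2 q^{−(k₁+⋯+k_n)} e_{(1,k)} and annihilating all basis vectors e_{(k₀,k)} with k₀ ≠ 0, and this operator is trace class; consequently, for every element w of the free unital complex *-algebra on x₁, …, x_{n+1}, the commutator [F, Ψ(w)] is trace class, where Ψ is the unital *-homomorphism with Ψ(x_i) = X_i (so (H, F, Ψ) is a 1-summable odd Fredholm module over A(S^{2n+1}_q)).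 -/

import Mathlib

/-- The standard orthonormal basis vector of `ℓ²(ℤ × ℕⁿ)` at `(k₀, k)`. -/
noncomputable def eVecZ (n : ℕ) (p : ℤ × (Fin n → ℕ)) :
    lp (fun _ : ℤ × (Fin n → ℕ) => ℂ) 2 :=
  lp.single 2 p 1

/-- A bounded operator on `ℓ²(ℤ × ℕⁿ)` is Hilbert–Schmidt if the squared norms of the
images of the standard basis vectors are summable. -/
def IsHilbertSchmidt {n : ℕ}
    (T : lp (fun _ : ℤ × (Fin n → ℕ) => ℂ) 2 →L[ℂ] lp (fun _ : ℤ × (Fin n → ℕ) => ℂ) 2) :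
    Prop :=
  Summable fun p : ℤ × (Fin n → ℕ) => ‖T (eVecZ n p)‖ ^ 2

/-- A bounded operator is trace class iff it is a product of two Hilbert–Schmidt
operators. -/
def IsTraceClass {n : ℕ}
    (T : lp (fun _ : ℤ × (Fin n → ℕ) => ℂ) 2 →L[ℂ] lp (fun _ : ℤ × (Fin n → ℕ) => ℂ) 2) :
    Prop :=
  ∃ A B, IsHilbertSchmidt A ∧ IsHilbertSchmidt B ∧ T = A * B


section Helpers

variable {n : ℕ}

local notation "HH" => lp (fun _ : ℤ × (Fin n → ℕ) => ℂ) 2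

theorem eV_inner (p : ℤ × (Fin n → ℕ)) (x : HH) : inner ℂ (eVecZ n p) x = x p := by
  unfold eVecZ
  rw [lp.inner_single_left]
  simp

theorem eV_apply (p r : ℤ × (Fin n → ℕ)) : (eVecZ n p) r = if r = p then 1 else 0 := by
  unfold eVecZ
  rw [lp.single_apply, Pi.single_apply]

theorem eV_inner_eV (p r : ℤ × (Fin n → ℕ)) :
    inner ℂ (eVecZ n p) (eVecZ n r) = if p = r then (1 : ℂ) else 0 := by
  rw [eV_inner, eV_apply]

theorem eV_norm (p : ℤ × (Fin n → ℕ)) : ‖eVecZ n p‖ = 1 := by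
  unfold eVecZ
  rw [lp.norm_single (by norm_num)]
  simp

theorem eV_orth : Orthonormal ℂ (eVecZ n) := by
  rw [orthonormal_iff_ite]
  intro p r
  exact eV_inner_eV p r

theorem op_ext {S T : HH →L[ℂ] HH} (h : ∀ p, S (eVecZ n p) = T (eVecZ n p)) : S = T := by
  apply lp.ext_continuousLinearMap (by norm_num)
  intro p
  ext
  simpa [eVecZ] using congrArg (fun z : HH => z _) (h p)

theorem norm_sq_hasSum (x : HH) : HasSum (fun p => ‖x p‖ ^ 2) (‖x‖ ^ 2) := by
  have := lp.hasSum_norm (p := 2) (by norm_num) x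
  simpa using this

theorem summable_swap_aux {α : Type*} (g : α → α → ℝ) (u v : α → ℝ) (hg : ∀ a b, 0 ≤ g a b)
    (hu : ∀ a, HasSum (fun b => g a b) (u a)) (hv : ∀ b, HasSum (fun a => g a b) (v b))
    (h : Summable u) : Summable v := by
  have h1 : Summable (fun pr : α × α => g pr.1 pr.2) := by
    rw [summable_prod_of_nonneg (fun _ => hg _ _)]
    exact ⟨fun p => (hu p).summable, h.congr (fun p => ((hu p).tsum_eq).symm)⟩
  have h2 := ((summable_prod_of_nonneg (fun _ => hg _ _)).1 h1.prod_symm).2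
  exact h2.congr (fun p => (hv p).tsum_eq)

theorem hs_star {T : HH →L[ℂ] HH} (hT : IsHilbertSchmidt T) : IsHilbertSchmidt (star T) := by
  refine summable_swap_aux (fun p r => ‖(T (eVecZ n p)) r‖ ^ 2) _ _
    (fun _ _ => sq_nonneg _) (fun p => norm_sq_hasSum _) (fun r => ?_) hT
  have h := norm_sq_hasSum ((star T) (eVecZ n r))
  have e : (fun p => ‖((star T) (eVecZ n r)) p‖ ^ 2) = fun p => ‖(T (eVecZ n p)) r‖ ^ 2 := by
    funext p
    rw [← eV_inner, ← eV_inner, ContinuousLinearMap.star_eq_adjoint,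
      ContinuousLinearMap.adjoint_inner_right, norm_inner_symm]
  rw [e] at h
  exact h

theorem hs_mul_left {T : HH →L[ℂ] HH} (S : HH →L[ℂ] HH) (hT : IsHilbertSchmidt T) :
    IsHilbertSchmidt (S * T) := by
  unfold IsHilbertSchmidt at *
  refine Summable.of_nonneg_of_le (fun _ => by positivity) (fun p => ?_) (hT.mul_left (‖S‖ ^ 2))
  rw [← mul_pow]
  gcongr
  exact S.le_opNorm _

theorem hs_mul_right {T : HH →L[ℂ] HH} (S : HH →L[ℂ] HH) (hT : IsHilbertSchmidt T) :
    IsHilbertSchmidt (T * S) := by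
  have := hs_star (hs_mul_left (star S) (hs_star hT))
  simpa using this

theorem hs_add {S T : HH →L[ℂ] HH} (hS : IsHilbertSchmidt S) (hT : IsHilbertSchmidt T) :
    IsHilbertSchmidt (S + T) := by
  unfold IsHilbertSchmidt at *
  refine Summable.of_nonneg_of_le (fun _ => by positivity) (fun p => ?_)
    ((hS.mul_left 2).add (hT.mul_left 2))
  have := norm_add_le (S (eVecZ n p)) (T (eVecZ n p))
  have h0 := norm_nonneg (S (eVecZ n p) + T (eVecZ n p))
  rw [ContinuousLinearMap.add_apply]
  nlinarith [sq_nonneg (‖S (eVecZ n p)‖ - ‖T (eVecZ n p)‖)]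

theorem exists_isom (f : ℤ × (Fin n → ℕ) → ℤ × (Fin n → ℕ)) (hf : Function.Injective f) :
    ∃ V : HH →L[ℂ] HH, ∀ p, V (eVecZ n p) = eVecZ n (f p) := by
  have ho : Orthonormal ℂ (fun p => eVecZ n (f p)) := eV_orth.comp f hf
  refine ⟨ho.orthogonalFamily.linearIsometry.toContinuousLinearMap, fun p => ?_⟩
  have := ho.orthogonalFamily.linearIsometry_apply_single (i := p) (1 : ℂ)
  simpa [eVecZ] using this

theorem op_ext2 {S T : HH →L[ℂ] HH}
    (h : ∀ p r, inner ℂ (eVecZ n r) (S (eVecZ n p)) = inner ℂ (eVecZ n r) (T (eVecZ n p))) :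
    S = T := by
  apply op_ext
  intro p
  ext r
  rw [← eV_inner, ← eV_inner, h]

theorem tc_add {S T : HH →L[ℂ] HH} (hS : IsTraceClass S) (hT : IsTraceClass T) :
    IsTraceClass (S + T) := by
  obtain ⟨A, B, hA, hB, rfl⟩ := hS
  obtain ⟨C, D, hC, hD, rfl⟩ := hT
  obtain ⟨V, hV⟩ := exists_isom (n := n) (fun p => (2 * p.1, p.2)) (by
    rintro ⟨a, b⟩ ⟨c, d⟩ h
    simp only [Prod.mk.injEq] at h ⊢
    exact ⟨by omega, h.2⟩)
  obtain ⟨W, hW⟩ := exists_isom (n := n) (fun p => (2 * p.1 + 1, p.2)) (by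
    rintro ⟨a, b⟩ ⟨c, d⟩ h
    simp only [Prod.mk.injEq] at h ⊢
    exact ⟨by omega, h.2⟩)
  have key : ∀ (P Q : HH →L[ℂ] HH) (p r), inner ℂ (eVecZ n r) ((star P * Q) (eVecZ n p)) =
      inner ℂ (P (eVecZ n r)) (Q (eVecZ n p)) := by
    intro P Q p r
    rw [mul_apply_eq_comp, ContinuousLinearMap.star_eq_adjoint,
      ContinuousLinearMap.adjoint_inner_right]
  have vv : star V * V = 1 := by
    apply op_ext2
    rintro ⟨a, b⟩ ⟨c, d⟩
    rw [key, hV, hV, ContinuousLinearMap.one_apply, eV_inner_eV, eV_inner_eV]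
    simp
  have ww : star W * W = 1 := by
    apply op_ext2
    rintro ⟨a, b⟩ ⟨c, d⟩
    rw [key, hW, hW, ContinuousLinearMap.one_apply, eV_inner_eV, eV_inner_eV]
    simp
  have vw : star V * W = 0 := by
    apply op_ext2
    rintro ⟨a, b⟩ ⟨c, d⟩
    rw [key, hV, hW, eV_inner_eV, if_neg]
    · simp
    · intro h
      simp only [Prod.mk.injEq] at h
      omega
  have wv : star W * V = 0 := by
    have := congrArg star vw
    simpa using this
  refine ⟨A * star V + C * star W, V * B + W * D, hs_add (hs_mul_right _ hA) (hs_mul_right _ hC),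
    hs_add (hs_mul_left _ hB) (hs_mul_left _ hD), ?_⟩
  have : (A * star V + C * star W) * (V * B + W * D) = A * (star V * V) * B +
    A * (star V * W) * D + C * (star W * V) * B + C * (star W * W) * D := by noncomm_ring
  rw [this, vv, vw, wv, ww]
  simp

theorem tc_mul_left {T : HH →L[ℂ] HH} (S : HH →L[ℂ] HH) (hT : IsTraceClass T) :
    IsTraceClass (S * T) := by
  obtain ⟨A, B, hA, hB, rfl⟩ := hT
  exact ⟨S * A, B, hs_mul_left _ hA, hB, by rw [mul_assoc]⟩

theorem tc_mul_right {T : HH →L[ℂ] HH} (S : HH →L[ℂ] HH) (hT : IsTraceClass T) :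
    IsTraceClass (T * S) := by
  obtain ⟨A, B, hA, hB, rfl⟩ := hT
  exact ⟨A, B * S, hA, hs_mul_right _ hB, by rw [mul_assoc]⟩

theorem tc_star {T : HH →L[ℂ] HH} (hT : IsTraceClass T) : IsTraceClass (star T) := by
  obtain ⟨A, B, hA, hB, rfl⟩ := hT
  exact ⟨star B, star A, hs_star hB, hs_star hA, by rw [star_mul]⟩

theorem tc_neg {T : HH →L[ℂ] HH} (hT : IsTraceClass T) : IsTraceClass (-T) := by
  have := tc_mul_left (-1) hT
  simpa using this

theorem tc_zero : IsTraceClass (0 : HH →L[ℂ] HH) :=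
  ⟨0, 0, by simp [IsHilbertSchmidt], by simp [IsHilbertSchmidt], by simp⟩

theorem exists_op (c : ℤ × (Fin n → ℕ) → ℂ) (hc : Summable (fun p => ‖c p‖))
    (f : ℤ × (Fin n → ℕ) → ℤ × (Fin n → ℕ)) :
    ∃ T : HH →L[ℂ] HH, ∀ p, T (eVecZ n p) = c p • eVecZ n (f p) := by
  have hs : Summable (fun p => c p • (innerSL ℂ (eVecZ n p)).smulRight (eVecZ n (f p))) := by
    apply Summable.of_norm
    refine hc.congr (fun p => ?_)
    rw [norm_smul, ContinuousLinearMap.norm_smulRight_apply, innerSL_apply_norm, eV_norm, eV_norm]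
    simp
  refine ⟨∑' p, c p • (innerSL ℂ (eVecZ n p)).smulRight (eVecZ n (f p)), fun r => ?_⟩
  have h := (hs.hasSum.mapL (ContinuousLinearMap.apply ℂ HH (eVecZ n r)))
  refine h.unique ?_
  convert hasSum_single r ?_ using 1
  · simp [eV_norm]
  · intro p hp
    simp [eV_inner_eV, hp]

theorem geo_summable (r : ℝ) (h0 : 0 ≤ r) (h1 : r < 1) (m : ℕ) :
    Summable (fun k : Fin m → ℕ => r ^ (∑ j, k j)) := by
  induction m with
  | zero => exact Summable.of_finite
  | succ m ih =>
    have h := (summable_geometric_of_lt_one h0 h1).mul_of_nonneg ih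
      (fun _ => by positivity) (fun _ => by positivity)
    rw [← (Fin.consEquiv (fun _ : Fin (m + 1) => ℕ)).summable_iff]
    refine h.congr (fun p => ?_)
    simp [Fin.consEquiv, Fin.sum_univ_succ, pow_add]

theorem exists_hs (r : ℝ) (h0 : 0 ≤ r) (h1 : r < 1) (c : (Fin n → ℕ) → ℂ)
    (hc : ∀ k, ‖c k‖ ≤ 2 * r ^ (∑ j, k j)) (t : ℤ) :
    ∃ T : HH →L[ℂ] HH, IsHilbertSchmidt T ∧
      ∀ p, T (eVecZ n p) = (if p.1 = 0 then c p.2 else 0) • eVecZ n (t, p.2) := by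
  have hinj : Function.Injective (fun k : Fin n → ℕ => ((0 : ℤ), k)) := fun a b h => by
    simpa using h
  have aux : ∀ g : ℤ × (Fin n → ℕ) → ℝ, (∀ p, p.1 ≠ 0 → g p = 0) →
      Summable (fun k => g (0, k)) → Summable g := by
    intro g hg hs
    refine (hinj.summable_iff ?_).1 hs
    rintro ⟨a, b⟩ hab
    apply hg
    rintro rfl
    exact hab ⟨b, rfl⟩
  have hg := geo_summable r h0 h1 n
  obtain ⟨T, hT⟩ := exists_op (n := n) (fun p => if p.1 = 0 then c p.2 else 0)
    (aux _ (fun p hp => by simp [hp]) (by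
      refine Summable.of_nonneg_of_le (fun _ => norm_nonneg _) (fun k => ?_) (hg.mul_left 2)
      simpa using hc k)) (fun p => (t, p.2))
  refine ⟨T, ?_, hT⟩
  refine aux _ (fun p hp => by rw [hT]; simp [hp]) ?_
  refine Summable.of_nonneg_of_le (fun _ => by positivity) (fun k => ?_) (hg.mul_left 4)
  rw [hT, norm_smul, eV_norm, mul_one]
  simp only [if_true]
  have h2 : r ^ (∑ j, k j) ≤ 1 := pow_le_one₀ h0 h1.le
  have h3 : 0 ≤ r ^ (∑ j, k j) := by positivity
  nlinarith [hc k, norm_nonneg (c k)]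

end Helpers

/-- The odd Fredholm module for `S^{2n+1}_q`:  `F` commutes with `Xᵢ` for `i ≥ 2`, the
commutator `[F, X₁]` is the explicit rank-one-in-`k₀` trace-class operator, and `[F, w]`
is trace class for every `w` in the *-algebra generated by `X₁, …, X_{n+1}`; so
`(H, F, Ψ)` is a `1`-summable odd Fredholm module over `A(S^{2n+1}_q)`. -/
theorem oddSphere_Fredholm_module (q : ℝ) (hq : 1 < |q|) (n : ℕ) (hn : 1 ≤ n)
    (X : ℕ → (lp (fun _ : ℤ × (Fin n → ℕ) => ℂ) 2 →L[ℂ] lp (fun _ : ℤ × (Fin n → ℕ) => ℂ) 2))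
    (F : lp (fun _ : ℤ × (Fin n → ℕ) => ℂ) 2 →L[ℂ] lp (fun _ : ℤ × (Fin n → ℕ) => ℂ) 2)
    (hX1 : ∀ (k₀ : ℤ) (k : Fin n → ℕ),
      X 1 (eVecZ n (k₀, k)) = (((q ^ (∑ j, k j))⁻¹ : ℝ) : ℂ) • eVecZ n (k₀ + 1, k))
    (hX1s : ∀ (k₀ : ℤ) (k : Fin n → ℕ),
      star (X 1) (eVecZ n (k₀, k)) = (((q ^ (∑ j, k j))⁻¹ : ℝ) : ℂ) • eVecZ n (k₀ - 1, k))
    (hXi : ∀ i : Fin n, ∀ (k₀ : ℤ) (k : Fin n → ℕ),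
      X ((i : ℕ) + 2) (eVecZ n (k₀, k)) =
        (((Real.sqrt (1 - (q ^ (2 * k i))⁻¹) *
          (q ^ (∑ j ∈ Finset.univ.filter fun j => i < j, k j))⁻¹ : ℝ)) : ℂ) •
          eVecZ n (k₀, Function.update k i (k i - 1)))
    (hF : ∀ (k₀ : ℤ) (k : Fin n → ℕ),
      F (eVecZ n (k₀, k)) = (if 0 < k₀ then (1 : ℂ) else -1) • eVecZ n (k₀, k)) :
    (∀ i : ℕ, 2 ≤ i → i ≤ n + 1 → F * X i = X i * F) ∧
    (∀ k : Fin n → ℕ,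
      (F * X 1 - X 1 * F) (eVecZ n (0, k)) =
        ((2 * (q ^ (∑ j, k j))⁻¹ : ℝ) : ℂ) • eVecZ n (1, k)) ∧
    (∀ (k₀ : ℤ) (k : Fin n → ℕ), k₀ ≠ 0 → (F * X 1 - X 1 * F) (eVecZ n (k₀, k)) = 0) ∧
    IsTraceClass (F * X 1 - X 1 * F) ∧
    (∀ w ∈ StarAlgebra.adjoin ℂ
        {T : lp (fun _ : ℤ × (Fin n → ℕ) => ℂ) 2 →L[ℂ] lp (fun _ : ℤ × (Fin n → ℕ) => ℂ) 2 |
          ∃ i : ℕ, 1 ≤ i ∧ i ≤ n + 1 ∧ T = X i},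
      IsTraceClass (F * w - w * F)) := by
  have hstarF : star F = F := by
    apply op_ext2
    rintro ⟨a, b⟩ ⟨c, d⟩
    rw [ContinuousLinearMap.star_eq_adjoint, ContinuousLinearMap.adjoint_inner_right, hF, hF,
      inner_smul_left, inner_smul_right, eV_inner_eV]
    by_cases h : (c, d) = (a, b)
    · obtain ⟨rfl, rfl⟩ := Prod.mk.inj h
      split_ifs <;> simp
    · simp [h]
  have ha : ∀ i : ℕ, 2 ≤ i → i ≤ n + 1 → F * X i = X i * F := by
    intro i h2 hi
    obtain ⟨j, rfl⟩ : ∃ j : Fin n, i = (j : ℕ) + 2 := ⟨⟨i - 2, by omega⟩, by simp; omega⟩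
    apply op_ext
    rintro ⟨a, b⟩
    rw [mul_apply_eq_comp, ContinuousLinearMap.mul_apply, hXi, hF, map_smul, map_smul,
      hXi, hF, smul_comm]
  have hb : ∀ k : Fin n → ℕ,
      (F * X 1 - X 1 * F) (eVecZ n (0, k)) =
        ((2 * (q ^ (∑ j, k j))⁻¹ : ℝ) : ℂ) • eVecZ n (1, k) := by
    intro k
    rw [sub_apply, mul_apply_eq_comp,
      mul_apply_eq_comp, hX1, hF, map_smul, map_smul, hX1, hF]
    simp only [zero_add, zero_lt_one, lt_irrefl, if_true, if_false]
    push_cast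
    module
  have hc : ∀ (k₀ : ℤ) (k : Fin n → ℕ), k₀ ≠ 0 →
      (F * X 1 - X 1 * F) (eVecZ n (k₀, k)) = 0 := by
    intro k₀ k h
    rw [sub_apply, mul_apply_eq_comp,
      mul_apply_eq_comp, hX1, hF, map_smul, map_smul, hX1, hF, smul_comm, sub_eq_zero]
    have : (0 < k₀ + 1) ↔ (0 < k₀) := by omega
    simp only [this]
  have hd : IsTraceClass (F * X 1 - X 1 * F) := by
    have hq0 : 0 < |q| := by linarith
    set r : ℝ := Real.sqrt (|q|⁻¹) with hr
    have hr0 : 0 < r := Real.sqrt_pos.2 (by positivity)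
    have hr2 : r ^ 2 = |q|⁻¹ := Real.sq_sqrt (by positivity)
    have hr1 : r < 1 := by
      have : |q|⁻¹ < 1 := inv_lt_one_of_one_lt₀ hq
      nlinarith
    obtain ⟨B, hB, hB'⟩ := exists_hs (n := n) r hr0.le hr1
      (fun k => ((r ^ (∑ j, k j) : ℝ) : ℂ)) (fun k => by
        have : 0 < r ^ (∑ j, k j) := by positivity
        rw [Complex.norm_real, Real.norm_of_nonneg this.le]
        linarith) 0
    obtain ⟨A, hA, hA'⟩ := exists_hs (n := n) r hr0.le hr1
      (fun k => ((2 * (q ^ (∑ j, k j))⁻¹ * (r ^ (∑ j, k j))⁻¹ : ℝ) : ℂ)) (fun k => by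
        have h : 0 < r ^ (∑ j, k j) := by positivity
        rw [Complex.norm_real, norm_mul, norm_mul, norm_inv, norm_inv, norm_pow, norm_pow,
          Real.norm_of_nonneg hr0.le, Real.norm_eq_abs q, ← inv_pow |q|, ← hr2,
          Real.norm_of_nonneg (by norm_num : (0 : ℝ) ≤ 2)]
        apply le_of_eq
        rw [pow_right_comm]
        field_simp) 1
    refine ⟨A, B, hA, hB, op_ext ?_⟩
    rintro ⟨a, k⟩
    rw [mul_apply_eq_comp, hB', map_smul, hA']
    by_cases h : a = 0
    · subst h
      rw [hb, smul_smul]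
      simp only [if_true]
      congr 1
      rw [← Complex.ofReal_mul]
      congr 1
      have h : 0 < r ^ (∑ j, k j) := by positivity
      field_simp
    · rw [hc _ _ h]
      simp [h]
  refine ⟨ha, hb, hc, hd, ?_⟩
  intro w hw
  induction hw using StarAlgebra.adjoin_induction with
  | mem x h =>
    obtain ⟨i, h1, h2, rfl⟩ := h
    by_cases hi : i = 1
    · subst hi; exact hd
    · rw [ha i (by omega) h2, sub_self]; exact tc_zero
  | algebraMap c =>
    rw [← Algebra.commutes, sub_self]; exact tc_zero
  | add x y _ _ hx hy =>
    have := tc_add hx hy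
    rwa [show F * (x + y) - (x + y) * F = (F * x - x * F) + (F * y - y * F) by noncomm_ring]
  | mul x y _ _ hx hy =>
    have := tc_add (tc_mul_right y hx) (tc_mul_left x hy)
    rwa [show F * (x * y) - (x * y) * F = (F * x - x * F) * y + x * (F * y - y * F) by
      noncomm_ring]
  | star x _ hx =>
    have := tc_neg (tc_star hx)
    rw [star_sub, star_mul, star_mul, hstarF, neg_sub] at this
    exact this
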